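/- Let M be a properly infinite σ-finite von Neumann algebra with a faithful normal semifinite trace τ, and let α ∈ M^n (n ≥ 1) be a commuting self-adjoint n-tuple such that the only finite projection of M belonging to WZ*(α) is 0. Let p, r ∈ M be projections with r τ-finite. Then for every ε > 0 there exists a partial isometry w ∈ M such that ww* ≤ 1 − r, w*w = p, and ‖[w, α]‖ ≤ ε + ‖[p, α]‖. -/

import Mathlib

open ContinuousLinearMap Filter Topology

noncomputable section

namespace VNA

variable {H : Type*} [NormedAddCommGroup H] [InnerProductSpace ℂ H] [CompleteSpace H]

/-- A projection (orthogonal projection): idempotent and self-adjoint. -/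
def IsProjection (p : H →L[ℂ] H) : Prop := p * p = p ∧ star p = p

/-- Murray–von Neumann equivalence of `p` and `q` relative to `M`. -/
def MvNE (M : VonNeumannAlgebra H) (p q : H →L[ℂ] H) : Prop :=
  ∃ v ∈ M, star v * v = p ∧ v * star v = q

/-- `p` is a finite projection of `M`; for projections, `q ≤ p` is the range
containment `p * q = q`. -/
def IsFiniteProjection (M : VonNeumannAlgebra H) (p : H →L[ℂ] H) : Prop :=
  p ∈ M ∧ IsProjection p ∧
    ∀ q, q ∈ M → IsProjection q → p * q = q → MvNE M q p → q = p

def IsInfiniteProjection (M : VonNeumannAlgebra H) (p : H →L[ℂ] H) : Prop :=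
  p ∈ M ∧ IsProjection p ∧ ¬ IsFiniteProjection M p

/-- The centre `Z(M) = M ∩ M'` as a set. -/
def centerSet (M : VonNeumannAlgebra H) : Set (H →L[ℂ] H) :=
  {z | z ∈ M ∧ ∀ y ∈ M, z * y = y * z}

def IsCentralProjection (M : VonNeumannAlgebra H) (z : H →L[ℂ] H) : Prop :=
  IsProjection z ∧ z ∈ centerSet M

def IsProperlyInfiniteProjection (M : VonNeumannAlgebra H) (p : H →L[ℂ] H) : Prop :=
  p ∈ M ∧ IsProjection p ∧
    ∀ z, IsCentralProjection M z → z * p ≠ 0 → IsInfiniteProjection M (z * p)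

def ProperlyInfinite (M : VonNeumannAlgebra H) : Prop :=
  IsProperlyInfiniteProjection M 1

/-- `M` is σ-finite: every family of pairwise orthogonal nonzero projections in `M`
is countable. -/
def SigmaFinite (M : VonNeumannAlgebra H) : Prop :=
  ∀ S : Set (H →L[ℂ] H), (∀ p ∈ S, p ∈ M ∧ IsProjection p ∧ p ≠ 0) →
    (∀ p ∈ S, ∀ q ∈ S, p ≠ q → p * q = 0) → S.Countable

/-- A faithful normal semifinite trace on `M`. -/
structure IsFNSTrace (M : VonNeumannAlgebra H) (τ : (H →L[ℂ] H) → ENNReal) : Prop where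
  map_zero : τ 0 = 0
  additive : ∀ x y : H →L[ℂ] H, x ∈ M → y ∈ M → 0 ≤ x → 0 ≤ y → τ (x + y) = τ x + τ y
  homogeneous : ∀ (c : ℝ) (x : H →L[ℂ] H), 0 ≤ c → x ∈ M → 0 ≤ x →
    τ (c • x) = ENNReal.ofReal c * τ x
  tracial : ∀ x : H →L[ℂ] H, x ∈ M → τ (star x * x) = τ (x * star x)
  faithful : ∀ x : H →L[ℂ] H, x ∈ M → 0 ≤ x → τ x = 0 → x = 0
  normal : ∀ (ι : Type*) [Preorder ι] [IsDirected ι (· ≤ ·)] [Nonempty ι]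
      (f : ι → (H →L[ℂ] H)) (x : H →L[ℂ] H),
      (∀ i, f i ∈ M) → (∀ i, 0 ≤ f i) → Monotone f → (∃ C : ℝ, ∀ i, ‖f i‖ ≤ C) →
      x ∈ M → IsLUB (Set.range f) x → τ x = ⨆ i, τ (f i)
  semifinite : ∀ x : H →L[ℂ] H, x ∈ M → 0 ≤ x → x ≠ 0 →
      ∃ y, y ∈ M ∧ 0 ≤ y ∧ y ≤ x ∧ y ≠ 0 ∧ τ y < ⊤

/-- `p` is a `τ`-finite projection of `M`. -/
def IsTauFiniteProjection (M : VonNeumannAlgebra H) (τ : (H →L[ℂ] H) → ENNReal)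
    (p : H →L[ℂ] H) : Prop :=
  p ∈ M ∧ IsProjection p ∧ τ p < ⊤

/-- `F₁⁺(M) = {x ∈ M : 0 ≤ x ≤ 1, px = x for some τ-finite projection p}`. -/
def F1plus (M : VonNeumannAlgebra H) (τ : (H →L[ℂ] H) → ENNReal) : Set (H →L[ℂ] H) :=
  {x | x ∈ M ∧ 0 ≤ x ∧ x ≤ 1 ∧ ∃ p, IsTauFiniteProjection M τ p ∧ p * x = x}

/-- `K(M,τ)`: operator-norm closure of the τ-finitely supported elements of `M`. -/
def Kideal (M : VonNeumannAlgebra H) (τ : (H →L[ℂ] H) → ENNReal) : Set (H →L[ℂ] H) :=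
  closure {x | x ∈ M ∧ ∃ p, IsTauFiniteProjection M τ p ∧ p * x = x}

/-- A commuting self-adjoint `n`-tuple in `M`. -/
def IsCommutingSelfAdjointTuple (M : VonNeumannAlgebra H) {n : ℕ}
    (α : Fin n → (H →L[ℂ] H)) : Prop :=
  (∀ j, α j ∈ M) ∧ (∀ j, star (α j) = α j) ∧ ∀ i j, α i * α j = α j * α i

/-- `‖[r,α]‖ = max_{1≤j≤n} ‖[r, α(j)]‖`. -/
def commNorm {n : ℕ} (α : Fin n → (H →L[ℂ] H)) (r : H →L[ℂ] H) : ℝ :=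
  ⨆ j, ‖r * α j - α j * r‖

/-- `WZ*(S)`: the double commutant in `B(H)` of `S ∪ Z(M)`. -/
def WZstar (M : VonNeumannAlgebra H) (S : Set (H →L[ℂ] H)) : Set (H →L[ℂ] H) :=
  Set.centralizer (Set.centralizer (S ∪ centerSet M))

/-- A diagonal operator of `M`: `d = Σ_k λ_k p_k` with pairwise orthogonal
projections `p_k ∈ M`, the series converging in the strong operator topology. -/
def IsDiagonal (M : VonNeumannAlgebra H) (d : H →L[ℂ] H) : Prop :=
  ∃ (p : ℕ → H →L[ℂ] H) (lam : ℕ → ℂ),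
    (∀ k, p k ∈ M) ∧ (∀ k, IsProjection (p k)) ∧
    (∀ k l, k ≠ l → p k * p l = 0) ∧
    ∀ ξ : H, HasSum (fun k => lam k • (p k ξ)) (d ξ)

end VNA

/-!
By hypothesis no nonzero projection of the commutative algebra `WZ*(α)` has finite trace, and
`WZ*(α)` contains the central projections of `M`. A comparison argument then moves any `e ∈ WZ*(α)`
isometrically under `e` and away from the `τ`-finite projection `r`. Splitting `1` along finitely
many projections of `WZ*(α)` and adding up such partial isometries gives an isometry `v` with
`r v = 0` commuting with all of them. As their linear span contains every `α(j)` up to a small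
error, `v` almost commutes with `α`, and `w = v p` works because `[v p, α] = [v, α] p + v [p, α]`.
-/

namespace VNA

section StarRing

variable {A : Type*} [Ring A] [StarRing A] {u v : A}

/-- Partial isometries, through their initial projection `star u * u`; the final projection is
`u * star u`. -/
def IsPartialIsometry (u : A) : Prop := IsStarProjection (star u * u)

theorem isPartialIsometry_of_star_mul_self_eq_one (h : star u * u = 1) : IsPartialIsometry u := by
  rw [IsPartialIsometry, h]
  exact .one A

theorem IsPartialIsometry.add_of_orthogonal (hu : IsPartialIsometry u) (hv : IsPartialIsometry v)
    (h : star u * v = 0) (h' : u * star v = 0) : IsPartialIsometry (u + v) := by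
  have h₂ : star v * u = 0 := by simpa using congr_arg star h
  have : star (u + v) * (u + v) = star u * u + star v * v := by
    simp only [star_add, add_mul, mul_add, h, h₂, add_zero, zero_add]
  rw [IsPartialIsometry, this]
  refine hu.add hv ?_
  rw [mul_assoc, ← mul_assoc u, h', zero_mul, mul_zero]

end StarRing

section CStarRing

variable {A : Type*} [NormedRing A] [StarRing A] [CStarRing A] {p u : A}

theorem mul_eq_self_of_star_mul_self_mul_eq (h : star u * u * p = star u * u) : u * p = u := by
  rw [← sub_eq_zero, ← CStarRing.star_mul_self_eq_zero_iff]
  calc star (u * p - u) * (u * p - u)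
      = star p * (star u * u * p - star u * u) - (star u * u * p - star u * u) := by
        simp only [star_sub, star_mul]; noncomm_ring
    _ = 0 := by rw [h]; simp

theorem mul_eq_self_of_mul_mul_eq_self {e g v : A} (he : IsStarProjection e)
    (hg : IsStarProjection g) (hge : Commute g e) (hv : star v * v = e * g) (hev : e * g * v = v) :
    e * v = v ∧ g * v = v ∧ v * g = v := by
  refine ⟨?_, ?_, mul_eq_self_of_star_mul_self_mul_eq ?_⟩
  · rw [← hev, ← mul_assoc, ← mul_assoc, he.isIdempotentElem.eq]
  · rw [← hev, ← mul_assoc, ← hge.eq, ← mul_assoc, hg.isIdempotentElem.eq]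
  · rw [hv, mul_assoc, hg.isIdempotentElem.eq]

namespace IsPartialIsometry

theorem mul_star_mul_self (hu : IsPartialIsometry u) : u * (star u * u) = u :=
  mul_eq_self_of_star_mul_self_mul_eq hu.isIdempotentElem

theorem isStarProjection_mul_star (hu : IsPartialIsometry u) : IsStarProjection (u * star u) where
  isIdempotentElem := by
    rw [IsIdempotentElem, ← mul_assoc, mul_assoc u, hu.mul_star_mul_self]
  isSelfAdjoint := .mul_star_self u

theorem star (hu : IsPartialIsometry u) : IsPartialIsometry (star u) := by
  rw [IsPartialIsometry, star_star]
  exact hu.isStarProjection_mul_star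

theorem star_mul_self_mul_star (hu : IsPartialIsometry u) :
    Star.star u * u * Star.star u = Star.star u := by
  rw [mul_assoc]
  simpa only [star_star] using hu.star.mul_star_mul_self

theorem norm_le_one (hu : IsPartialIsometry u) : ‖u‖ ≤ 1 := by
  rw [← sq_le_one_iff₀ (norm_nonneg u), sq, ← CStarRing.norm_star_mul_self]
  exact hu.norm_le

end IsPartialIsometry

end CStarRing

variable {H : Type*} [NormedAddCommGroup H] [InnerProductSpace ℂ H] [CompleteSpace H]
  {M : VonNeumannAlgebra H}

theorem isProjection_iff_isStarProjection {p : H →L[ℂ] H} :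
    IsProjection p ↔ IsStarProjection p :=
  ⟨fun h => ⟨h.1, h.2⟩, fun h => ⟨h.isIdempotentElem, h.isSelfAdjoint⟩⟩

theorem mem_iff_forall_commutant_commute {x : H →L[ℂ] H} :
    x ∈ M ↔ ∀ y ∈ M.commutant, Commute y x := by
  conv_lhs => rw [← M.commutant_commutant, VonNeumannAlgebra.mem_commutant_iff]
  rfl

theorem commute_of_mem_commutant {x y : H →L[ℂ] H} (hx : x ∈ M) (hy : y ∈ M.commutant) :
    Commute y x :=
  mem_iff_forall_commutant_commute.1 hx y hy

theorem starProjection_mem (K : Submodule ℂ H) [K.HasOrthogonalProjection]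
    (hK : ∀ y ∈ M.commutant, ∀ ξ ∈ K, y ξ ∈ K) : K.starProjection ∈ M := by
  rw [VonNeumannAlgebra.IsStarProjection.mem_iff isStarProjection_starProjection]
  exact fun y hy => by simpa [Module.End.mem_invtSubmodule, SetLike.le_def] using hK y hy

/-- The right support of `b`: the projection onto the orthogonal complement of its kernel. -/
def rightSupport (b : H →L[ℂ] H) : H →L[ℂ] H := (b.ker)ᗮ.starProjection

theorem isStarProjection_rightSupport (b : H →L[ℂ] H) : IsStarProjection (rightSupport b) :=
  isStarProjection_starProjection

theorem mul_rightSupport (b : H →L[ℂ] H) : b * rightSupport b = b := by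
  ext ξ
  have : ξ - rightSupport b ξ ∈ (b.ker)ᗮᗮ := Submodule.sub_starProjection_mem_orthogonal ξ
  rw [Submodule.orthogonal_orthogonal_eq_closure,
    b.isClosed_ker.submodule_topologicalClosure_eq, LinearMap.mem_ker] at this
  rw [coe_coe, map_sub, sub_eq_zero] at this
  exact this.symm

theorem rightSupport_mul_eq_zero_iff {a b : H →L[ℂ] H} :
    rightSupport b * a = 0 ↔ b * a = 0 := by
  refine ⟨fun h => by rw [← mul_rightSupport b, mul_assoc, h, mul_zero], fun h => ?_⟩
  ext ξ
  exact (Submodule.starProjection_apply_eq_zero_iff _).2 <|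
    Submodule.le_orthogonal_orthogonal _ (DFunLike.congr_fun h ξ)

theorem rightSupport_mem {b : H →L[ℂ] H} (hb : b ∈ M) : rightSupport b ∈ M := by
  refine starProjection_mem _ fun y hy ξ hξ η hη => ?_
  rw [← ContinuousLinearMap.adjoint_inner_left]
  refine hξ _ ?_
  have hcomm := DFunLike.congr_fun (commute_of_mem_commutant hb (star_mem hy)).eq η
  rw [mul_apply_eq_comp, mul_apply_eq_comp, show b η = 0 from hη, map_zero] at hcomm
  exact hcomm.symm

theorem mul_rightSupport_eq_zero_iff {a b : H →L[ℂ] H} (hb : IsSelfAdjoint b) :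
    a * rightSupport b = 0 ↔ a * b = 0 := by
  rw [← star_eq_zero, star_mul, (isStarProjection_rightSupport b).isSelfAdjoint.star_eq,
    rightSupport_mul_eq_zero_iff, ← star_eq_zero, star_mul, star_star, hb.star_eq]

theorem star_mul_self_eq_star_mul_self_iff_norm {x y : H →L[ℂ] H} :
    star x * x = star y * y ↔ ∀ ξ, ‖x ξ‖ = ‖y ξ‖ := by
  have inner_eq (T : H →L[ℂ] H) (ξ : H) : inner ℂ ((star T * T) ξ) ξ = ((‖T ξ‖ ^ 2 : ℝ) : ℂ) := by
    rw [mul_apply_eq_comp, star_eq_adjoint, adjoint_inner_left]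
    exact_mod_cast inner_self_eq_norm_sq_to_K (𝕜 := ℂ) (T ξ)
  rw [← coe_inj, ← ext_inner_map]
  refine forall_congr' fun ξ => ?_
  rw [coe_coe, coe_coe, inner_eq, inner_eq, Complex.ofReal_inj,
    sq_eq_sq₀ (norm_nonneg _) (norm_nonneg _)]

theorem exists_mul_eq_of_norm_apply_eq {s x : H →L[ℂ] H} (h : ∀ ξ, ‖x ξ‖ = ‖s ξ‖) :
    ∃ v, star v * v = rightSupport (star s) ∧ v * s = x := by
  let K := s.range.topologicalClosure
  have hK : K.starProjection = rightSupport (star s) := by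
    simp only [rightSupport, orthogonal_ker, ← star_eq_adjoint, star_star, K]
  let e : H →ₗ[ℂ] K := (s : H →ₗ[ℂ] H).codRestrict K fun ξ =>
    s.range.le_topologicalClosure ⟨ξ, rfl⟩
  have he : DenseRange e := Subtype.dense_iff.2 <| by
    rw [← Set.range_comp]
    exact (Submodule.topologicalClosure_coe _).subset
  have hxe : ∀ ξ, ‖x ξ‖ ≤ 1 * ‖e ξ‖ := fun ξ => by rw [one_mul, h]; rfl
  let w : K →L[ℂ] H := (x : H →ₗ[ℂ] H).extendOfNorm e
  have hwe : ∀ ξ, w (e ξ) = x ξ := LinearMap.extendOfNorm_eq he ⟨1, hxe⟩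
  have hw : ∀ k, ‖w k‖ = ‖k‖ := he.induction (by rintro _ ⟨ξ, rfl⟩; rw [hwe, h]; rfl)
    (isClosed_eq (by fun_prop) (by fun_prop))
  refine ⟨w ∘L K.orthogonalProjectionOnto, ?_, ?_⟩
  · have hE := isStarProjection_rightSupport (star s)
    rw [← hE.isIdempotentElem.eq]
    nth_rw 1 [← hE.isSelfAdjoint.star_eq]
    refine star_mul_self_eq_star_mul_self_iff_norm.2 fun ξ => ?_
    rw [← hK]
    exact hw _
  · ext ξ
    rw [← hwe ξ]
    exact congr_arg w (Submodule.orthogonalProjectionOnto_mem_subspace_eq_self (e ξ))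

theorem norm_abs_apply (x : H →L[ℂ] H) (ξ : H) : ‖CFC.abs x ξ‖ = ‖x ξ‖ :=
  star_mul_self_eq_star_mul_self_iff_norm.1
    (by rw [(CFC.abs_nonneg x).star_eq, CFC.abs_mul_abs]) ξ

theorem rightSupport_abs (x : H →L[ℂ] H) : rightSupport (CFC.abs x) = rightSupport x := by
  have : (CFC.abs x).ker = x.ker := by
    ext ξ
    simp only [LinearMap.mem_ker, coe_coe, ← norm_eq_zero (E := H), norm_abs_apply]
  simp only [rightSupport, this]

theorem exists_polar_decomposition {x : H →L[ℂ] H} (hx : x ∈ M) :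
    ∃ v ∈ M, star v * v = rightSupport x ∧ v * CFC.abs x = x := by
  obtain ⟨v, hv, hvx⟩ := exists_mul_eq_of_norm_apply_eq fun ξ => (norm_abs_apply x ξ).symm
  rw [(CFC.abs_nonneg x).star_eq, rightSupport_abs] at hv
  have hvE : v * rightSupport x = v := mul_eq_self_of_star_mul_self_mul_eq <| by
    rw [hv, (isStarProjection_rightSupport x).isIdempotentElem.eq]
  refine ⟨v, mem_iff_forall_commutant_commute.2 fun y hy => ?_, hv, hvx⟩
  have hyx : Commute y x := commute_of_mem_commutant hx hy
  have hyabs : Commute y (CFC.abs x) :=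
    hyx.symm.cfcAbs_right (commute_of_mem_commutant hx (star_mem hy)).symm
  have hyE : Commute y (rightSupport x) := commute_of_mem_commutant (rightSupport_mem hx) hy
  have hzero : (y * v - v * y) * rightSupport x = 0 := by
    rw [← rightSupport_abs, mul_rightSupport_eq_zero_iff (CFC.abs_nonneg x).isSelfAdjoint, sub_mul,
      mul_assoc, hvx, mul_assoc, hyabs.eq, ← mul_assoc, hvx, hyx.eq, sub_self]
  rwa [sub_mul, mul_assoc, hvE, mul_assoc, hyE.eq, ← mul_assoc, hvE, sub_eq_zero] at hzero

theorem exists_central_cover {h : H →L[ℂ] H} (hh : h ∈ M) :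
    ∃ z, IsCentralProjection M z ∧ z * h = h ∧
      ∀ a : H →L[ℂ] H, (∀ y ∈ M, a * y * h = 0) → a * z = 0 := by
  let S : Set H := {ξ | ∃ y ∈ M, ∃ η, y (h η) = ξ}
  let K := (Submodule.span ℂ S).topologicalClosure
  have hSK : S ⊆ K := Submodule.subset_span.trans (Submodule.le_topologicalClosure _)
  have map_mem (x : H →L[ℂ] H) (hx : ∀ ξ ∈ S, x ξ ∈ S) : ∀ ξ ∈ K, x ξ ∈ K := by
    refine fun ξ hξ => map_mem_closure x.continuous hξ fun ζ hζ => ?_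
    have : Submodule.span ℂ S ≤ (Submodule.span ℂ S).comap (x : H →ₗ[ℂ] H) :=
      Submodule.span_le.2 fun ζ hζ => Submodule.subset_span (hx ζ hζ)
    exact this hζ
  have hM : ∀ x ∈ M, ∀ ξ ∈ K, x ξ ∈ K := fun x hx => map_mem x <| by
    rintro _ ⟨y, hy, η, rfl⟩
    exact ⟨x * y, mul_mem hx hy, η, rfl⟩
  have hM' : ∀ x ∈ M.commutant, ∀ ξ ∈ K, x ξ ∈ K := fun x hx => map_mem x <| by
    rintro _ ⟨y, hy, η, rfl⟩
    exact ⟨y, hy, x η, (DFunLike.congr_fun (commute_of_mem_commutant (mul_mem hy hh) hx).eq η).symm⟩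
  have hz : K.starProjection ∈ M.commutant :=
    starProjection_mem K (by simpa only [VonNeumannAlgebra.commutant_commutant] using hM)
  refine ⟨K.starProjection, ⟨isProjection_iff_isStarProjection.2 isStarProjection_starProjection,
    starProjection_mem K hM', fun y hy => (commute_of_mem_commutant hy hz).eq⟩, ?_, fun a ha => ?_⟩
  · ext ξ
    exact Submodule.starProjection_eq_self_iff.2 (hSK ⟨1, one_mem M, ξ, rfl⟩)
  · have hKa : K ≤ a.ker := Submodule.topologicalClosure_minimal _ (Submodule.span_le.2 <| by
      rintro _ ⟨y, hy, η, rfl⟩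
      exact DFunLike.congr_fun (ha y hy) η) a.isClosed_ker
    ext ξ
    exact hKa (K.starProjection_apply_mem ξ)

theorem exists_forall_hasSum_apply {ι E F : Type*} [NormedAddCommGroup E] [NormedSpace ℂ E]
    [NormedAddCommGroup F] [NormedSpace ℂ F] {u : ι → E →L[ℂ] F} {C : ℝ}
    (hC : ∀ s : Finset ι, ‖∑ i ∈ s, u i‖ ≤ C)
    (hs : ∀ ξ, Summable fun i => u i ξ) :
    ∃ U : E →L[ℂ] F, ∀ ξ, HasSum (fun i => u i ξ) (U ξ) := by
  let T : E →ₗ[ℂ] F :=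
    { toFun := fun ξ => ∑' i, u i ξ
      map_add' := fun ξ η => by simp only [map_add, (hs ξ).tsum_add (hs η)]
      map_smul' := fun c ξ => by simp only [map_smul, (hs ξ).tsum_const_smul, RingHom.id_apply] }
  refine ⟨T.mkContinuous C fun ξ => ?_, fun ξ => (hs ξ).hasSum⟩
  refine le_of_tendsto (hs ξ).hasSum.norm (Eventually.of_forall fun s => ?_)
  rw [← sum_apply]
  exact le_of_opNorm_le _ (hC s) ξ

section OrthogonalSum

variable {ι : Type*} {u : ι → H →L[ℂ] H} {U : H →L[ℂ] H}

/-- For pairwise orthogonal partial isometries `u i`, says that `U` is their strong-operator sum;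
the encoding keeps only the algebraic consequences of convergence. -/
structure IsOrthogonalSum (u : ι → H →L[ℂ] H) (U : H →L[ℂ] H) : Prop where
  isPartialIsometry_apply : ∀ i, IsPartialIsometry (u i)
  mul_star_mul_self : ∀ i, U * (star (u i) * u i) = u i
  mul_star_self_mul : ∀ i, u i * star (u i) * U = u i
  mul_eq_zero : ∀ a, (∀ i, u i * a = 0) → U * a = 0

namespace IsOrthogonalSum

theorem star_mul (hU : IsOrthogonalSum u U) (i : ι) : star U * u i = star (u i) * u i := by
  have h : star U * (u i * star (u i)) = star (u i) := by
    simpa using congr_arg star (hU.mul_star_self_mul i)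
  nth_rw 1 [← (hU.isPartialIsometry_apply i).mul_star_mul_self]
  rw [← mul_assoc (u i), ← mul_assoc, h]

theorem mul_star (hU : IsOrthogonalSum u U) (i : ι) : u i * star U = u i * star (u i) := by
  have h : star (u i) * u i * star U = star (u i) := by
    simpa [mul_assoc] using congr_arg star (hU.mul_star_mul_self i)
  nth_rw 1 [← (hU.isPartialIsometry_apply i).mul_star_mul_self]
  rw [mul_assoc, h]

theorem mul_star_eq_zero_of_forall (hU : IsOrthogonalSum u U) {x : H →L[ℂ] H}
    (h : ∀ i, x * (star (u i) * u i) = 0) : U * star x = 0 := by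
  refine hU.mul_eq_zero _ fun i => ?_
  rw [← CStarRing.star_mul_self_eq_zero_iff]
  have : star (u i * star x) * (u i * star x) = x * (star (u i) * u i) * star x := by
    simp only [StarMul.star_mul, star_star, mul_assoc]
  rw [this, h, zero_mul]

theorem isPartialIsometry (hU : IsOrthogonalSum u U) : IsPartialIsometry U where
  isIdempotentElem := by
    have : U * star (star U * U - 1) = 0 := hU.mul_star_eq_zero_of_forall fun i => by
      rw [sub_mul, mul_assoc, hU.mul_star_mul_self, hU.star_mul, one_mul, sub_self]
    have h : U * (star U * U) = U := by simpa [mul_sub, sub_eq_zero] using this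
    rw [IsIdempotentElem, mul_assoc, h]
  isSelfAdjoint := .star_mul_self U

theorem mul_left_eq_zero (hU : IsOrthogonalSum u U) {a : H →L[ℂ] H} (h : ∀ i, a * u i = 0) :
    a * U = 0 := by
  have h' : U * star (a * U) = 0 := hU.mul_star_eq_zero_of_forall fun i => by
    rw [mul_assoc, hU.mul_star_mul_self, h]
  have : a * U * star U = 0 := by simpa using congr_arg star h'
  rw [← hU.isPartialIsometry.mul_star_mul_self]
  simp only [← mul_assoc, this, zero_mul]

theorem mul_eq_self (hU : IsOrthogonalSum u U) {a : H →L[ℂ] H} (h : ∀ i, u i * a = u i) :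
    U * a = U := by
  have := hU.mul_eq_zero (1 - a) fun i => by rw [mul_sub, mul_one, h, sub_self]
  rwa [mul_sub, mul_one, sub_eq_zero, eq_comm] at this

theorem mul_left_eq_self (hU : IsOrthogonalSum u U) {a : H →L[ℂ] H} (h : ∀ i, a * u i = u i) :
    a * U = U := by
  have := hU.mul_left_eq_zero (a := 1 - a) fun i => by rw [sub_mul, one_mul, h, sub_self]
  rwa [sub_mul, one_mul, sub_eq_zero, eq_comm] at this

theorem apply_mul_star_eq_zero (hU : IsOrthogonalSum u U) {w : H →L[ℂ] H} (h : U * star w = 0)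
    (i : ι) : u i * star w = 0 := by
  rw [← hU.mul_star_self_mul, mul_assoc, h, mul_zero]

theorem star_apply_mul_eq_zero (hU : IsOrthogonalSum u U) {w : H →L[ℂ] H} (h : star U * w = 0)
    (i : ι) : star (u i) * w = 0 := by
  rw [← (hU.isPartialIsometry_apply i).star_mul_self_mul_star, mul_assoc, mul_assoc,
    ← mul_assoc (u i), ← hU.mul_star, mul_assoc, h, mul_zero, mul_zero]

theorem mem (hU : IsOrthogonalSum u U) (hu : ∀ i, u i ∈ M) : U ∈ M := by
  refine mem_iff_forall_commutant_commute.2 fun y hy => ?_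
  have hyu (i : ι) : Commute y (u i) := commute_of_mem_commutant (hu i) hy
  have hyp (i : ι) : Commute y (star (u i) * u i) :=
    commute_of_mem_commutant (mul_mem (star_mem (hu i)) (hu i)) hy
  have h₁ : U * star (y * U - U * y) = 0 := hU.mul_star_eq_zero_of_forall fun i => by
    rw [sub_mul, mul_assoc, hU.mul_star_mul_self, mul_assoc, (hyp i).eq, ← mul_assoc,
      hU.mul_star_mul_self, (hyu i).eq, sub_self]
  have h₂ : U * (y * (1 - star U * U)) = 0 := hU.mul_eq_zero _ fun i => by
    rw [← mul_assoc, ← (hyu i).eq, mul_assoc, mul_sub, mul_one, ← mul_assoc, hU.mul_star,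
      hU.mul_star_self_mul, sub_self, mul_zero]
  have h₃ : U * y = U * y * (star U * U) := by
    rwa [← mul_assoc, mul_sub, mul_one, sub_eq_zero] at h₂
  have h₄ : (y * U - U * y) * star U = 0 := by simpa using congr_arg star h₁
  rw [sub_mul, sub_eq_zero] at h₄
  rw [commute_iff_eq, h₃, ← mul_assoc (U * y), ← h₄, mul_assoc, mul_assoc,
    hU.isPartialIsometry.mul_star_mul_self]

end IsOrthogonalSum

theorem isPartialIsometry_sum (hu : ∀ i, IsPartialIsometry (u i))
    (h : Pairwise fun i j => star (u i) * u j = 0) (h' : Pairwise fun i j => u i * star (u j) = 0)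
    (s : Finset ι) : IsPartialIsometry (∑ i ∈ s, u i) := by
  classical
  induction s using Finset.induction_on with
  | empty => simp [IsPartialIsometry, IsStarProjection.zero]
  | insert i s hi ih =>
    have hne : ∀ j ∈ s, i ≠ j := fun j hj hij => hi (hij ▸ hj)
    rw [Finset.sum_insert hi]
    refine (hu i).add_of_orthogonal ih ?_ ?_
    · rw [Finset.mul_sum, Finset.sum_eq_zero fun j hj => h (hne j hj)]
    · rw [star_sum, Finset.mul_sum, Finset.sum_eq_zero fun j hj => h' (hne j hj)]

theorem summable_apply_of_orthogonal (hu : ∀ i, IsPartialIsometry (u i))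
    (h : Pairwise fun i j => star (u i) * u j = 0) (h' : Pairwise fun i j => u i * star (u j) = 0)
    (ξ : H) : Summable fun i => u i ξ := by
  have horth : OrthogonalFamily ℂ (fun i => (u i).range) fun i => (u i).range.subtypeₗᵢ := by
    refine OrthogonalFamily.of_pairwise fun i j hij => ?_
    rintro _ ⟨η, rfl⟩ _ ⟨ζ, rfl⟩
    rw [coe_coe, coe_coe, ← adjoint_inner_left, ← star_eq_adjoint, ← mul_apply_eq_comp, h hij,
      zero_apply, inner_zero_left]
  have hnorm (s : Finset ι) : ∑ i ∈ s, ‖u i ξ‖ ^ 2 ≤ ‖ξ‖ ^ 2 := by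
    have hsum : ‖∑ i ∈ s, u i ξ‖ ^ 2 = ∑ i ∈ s, ‖u i ξ‖ ^ 2 :=
      horth.norm_sum (fun i => ⟨u i ξ, ξ, rfl⟩) s
    have hle := (∑ i ∈ s, u i).le_of_opNorm_le (isPartialIsometry_sum hu h h' s).norm_le_one ξ
    rw [one_mul, sum_apply] at hle
    rw [← hsum]
    gcongr
  exact (horth.summable_iff_norm_sq_summable fun i => ⟨u i ξ, ξ, rfl⟩).2 <|
    summable_of_sum_le (fun i => sq_nonneg _) hnorm

theorem exists_isOrthogonalSum (hu : ∀ i, IsPartialIsometry (u i))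
    (h : Pairwise fun i j => star (u i) * u j = 0)
    (h' : Pairwise fun i j => u i * star (u j) = 0) : ∃ U, IsOrthogonalSum u U := by
  obtain ⟨U, hU⟩ := exists_forall_hasSum_apply
    (fun s => (isPartialIsometry_sum hu h h' s).norm_le_one) (summable_apply_of_orthogonal hu h h')
  refine ⟨U, hu, fun i => ?_, fun i => ?_, fun a ha => ?_⟩
  · ext ξ
    have h₀ (j) (hj : j ≠ i) : u j ((star (u i) * u i) ξ) = 0 := congr($(h' hj) (u i ξ))
    exact ((hU _).unique (hasSum_single i h₀)).trans congr($((hu i).mul_star_mul_self) ξ)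
  · ext ξ
    have h₀ (j) (hj : j ≠ i) : (u i * star (u i)) (u j ξ) = 0 := by
      simpa using congr(u i ($(h hj.symm) ξ))
    exact (((hU ξ).mapL (u i * star (u i))).unique (hasSum_single i h₀)).trans
      congr($((hu i).mul_star_mul_self) ξ)
  · ext ξ
    have h₀ (i) : u i (a ξ) = 0 := congr($(ha i) ξ)
    have hUa := hU (a ξ)
    simp only [h₀] at hUa
    exact hUa.unique hasSum_zero

end OrthogonalSum

theorem exists_star_mul_self_eq_rightSupport {x : H →L[ℂ] H} (hx : x ∈ M) :
    ∃ v ∈ M, star v * v = rightSupport x ∧ ∀ a, a * x = 0 → a * v = 0 := by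
  obtain ⟨v, hvM, hv, hvx⟩ := exists_polar_decomposition hx
  refine ⟨v, hvM, hv, fun a ha => ?_⟩
  have hvE : v * rightSupport x = v := mul_eq_self_of_star_mul_self_mul_eq <| by
    rw [hv, (isStarProjection_rightSupport x).isIdempotentElem.eq]
  rw [← hvE, ← mul_assoc, ← rightSupport_abs,
    mul_rightSupport_eq_zero_iff (CFC.abs_nonneg x).isSelfAdjoint, mul_assoc, hvx, ha]

theorem exists_isOrthogonalSum_maximal {S : Set (H →L[ℂ] H)} (hS : ∀ w ∈ S, IsPartialIsometry w) :
    ∃ (C : Set S) (U : H →L[ℂ] H), IsOrthogonalSum (fun w : C => w.1.1) U ∧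
      ∀ w ∈ S, star U * w = 0 → U * star w = 0 → w = 0 := by
  let r : S → S → Prop := fun v w => star v.1 * w.1 = 0 ∧ v.1 * star w.1 = 0
  have r_symm {v w : S} (hvw : r v w ∨ r w v) : r v w := hvw.elim id fun hwv =>
    ⟨by simpa using congr_arg star hwv.1, by simpa using congr_arg star hwv.2⟩
  let C : Set S := maxChain r
  have hC : IsMaxChain r C := maxChain_spec
  have hCr (v w : C) (hvw : v ≠ w) : r v w :=
    r_symm (hC.1 v.2 w.2 fun heq => hvw (Subtype.ext heq))
  obtain ⟨U, hU⟩ := exists_isOrthogonalSum (u := fun w : C => w.1.1) (fun w => hS _ w.1.2)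
    (fun v w hvw => (hCr v w hvw).1) (fun v w hvw => (hCr v w hvw).2)
  refine ⟨C, U, hU, fun w hw h h' => ?_⟩
  have hr (v : S) (hv : v ∈ C) : r v ⟨w, hw⟩ :=
    ⟨hU.star_apply_mul_eq_zero h ⟨v, hv⟩, hU.apply_mul_star_eq_zero h' ⟨v, hv⟩⟩
  have hwC : ⟨w, hw⟩ ∈ C := by
    rw [hC.2 (hC.1.insert fun v hv _ => Or.inr (hr v hv)) (Set.subset_insert _ _)]
    exact Set.mem_insert _ _
  exact (CStarRing.star_mul_self_eq_zero_iff w).1 (hr _ hwC).1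

section Comparison

variable {f h : H →L[ℂ] H}

theorem exists_partialIsometry_of_mul_mul_ne_zero (hfM : f ∈ M) (hhM : h ∈ M)
    (hf : IsStarProjection f) (hh : IsStarProjection h) {y : H →L[ℂ] H} (hy : y ∈ M)
    (hfyh : f * y * h ≠ 0) :
    ∃ w ∈ M, IsPartialIsometry w ∧ w ≠ 0 ∧ w * f = w ∧ h * w = w := by
  have hx : star (f * y * h) ∈ M := star_mem (mul_mem (mul_mem hfM hy) hhM)
  obtain ⟨w, hwM, hw, hann⟩ := exists_star_mul_self_eq_rightSupport hx
  refine ⟨w, hwM, ?_, ?_, mul_eq_self_of_star_mul_self_mul_eq ?_, ?_⟩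
  · rw [IsPartialIsometry, hw]
    exact isStarProjection_rightSupport _
  · rintro rfl
    apply hfyh
    rw [← star_eq_zero, ← mul_rightSupport (star _), ← hw, star_zero, zero_mul, mul_zero]
  · have : rightSupport (star (f * y * h)) * (1 - f) = 0 := rightSupport_mul_eq_zero_iff.2 <| by
      simp only [star_mul, hf.isSelfAdjoint.star_eq, mul_assoc, hf.mul_one_sub_self, mul_zero]
    rw [mul_sub, mul_one, sub_eq_zero] at this
    rw [hw, ← this]
  · have := hann (1 - h) <| by
      simp only [star_mul, hh.isSelfAdjoint.star_eq, ← mul_assoc, hh.one_sub_mul_self, zero_mul]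
    rw [sub_mul, one_mul, sub_eq_zero] at this
    exact this.symm

theorem exists_partialIsometry_forall_sub_mul_mul_sub_eq_zero (hfM : f ∈ M) (hhM : h ∈ M)
    (hf : IsStarProjection f) (hh : IsStarProjection h) :
    ∃ u ∈ M, IsPartialIsometry u ∧ u * f = u ∧ h * u = u ∧
      ∀ y ∈ M, (f - star u * u) * y * (h - u * star u) = 0 := by
  let S : Set (H →L[ℂ] H) := {w | w ∈ M ∧ IsPartialIsometry w ∧ w * f = w ∧ h * w = w}
  obtain ⟨C, u, hu, hmax⟩ := exists_isOrthogonalSum_maximal (S := S) fun w hw => hw.2.1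
  have huM : u ∈ M := hu.mem fun w => w.1.2.1
  have huf : u * f = u := hu.mul_eq_self fun w => w.1.2.2.2.1
  have hhu : h * u = u := hu.mul_left_eq_self fun w => w.1.2.2.2.2
  refine ⟨u, huM, hu.isPartialIsometry, huf, hhu, fun y hy => by_contra fun hne => ?_⟩
  have hf₁ : IsStarProjection (f - star u * u) :=
    hu.isPartialIsometry.sub_of_mul_eq_left hf (by rw [mul_assoc, huf])
  have hh₁ : IsStarProjection (h - u * star u) :=
    hu.isPartialIsometry.isStarProjection_mul_star.sub_of_mul_eq_right hh (by rw [← mul_assoc, hhu])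
  obtain ⟨w, hwM, hw, hw0, hwf, hhw⟩ := exists_partialIsometry_of_mul_mul_ne_zero
    (sub_mem hfM (mul_mem (star_mem huM) huM)) (sub_mem hhM (mul_mem huM (star_mem huM)))
    hf₁ hh₁ hy hne
  have h₁ : u * star w = 0 := by
    have hfu : f * star u = star u := by simpa [hf.isSelfAdjoint.star_eq] using congr_arg star huf
    have : w * star u = 0 := by
      rw [← hwf, mul_assoc, sub_mul, hfu, hu.isPartialIsometry.star_mul_self_mul_star, sub_self,
        mul_zero]
    simpa using congr_arg star this
  have h₂ : star u * w = 0 := by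
    have huh : star u * h = star u := by
      simpa [hh.isSelfAdjoint.star_eq] using congr_arg star hhu
    rw [← hhw, ← mul_assoc, mul_sub, huh, ← mul_assoc,
      hu.isPartialIsometry.star_mul_self_mul_star, sub_self, zero_mul]
  refine hw0 (hmax w ⟨hwM, hw, ?_, ?_⟩ h₂ h₁)
  · rw [← hwf, mul_assoc, sub_mul, mul_assoc, huf, hf.isIdempotentElem.eq]
  · rw [← hhw, ← mul_assoc, mul_sub, ← mul_assoc, hhu, hh.isIdempotentElem.eq]

theorem exists_comparison (hfM : f ∈ M) (hhM : h ∈ M)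
    (hf : IsStarProjection f) (hh : IsStarProjection h) :
    ∃ u ∈ M, IsPartialIsometry u ∧ u * f = u ∧ h * u = u ∧ ∃ z, IsCentralProjection M z ∧
      (f - star u * u) * z = 0 ∧ (h - u * star u) * (1 - z) = 0 := by
  obtain ⟨u, huM, hu, huf, hhu, hann⟩ :=
    exists_partialIsometry_forall_sub_mul_mul_sub_eq_zero hfM hhM hf hh
  have hh₁ : h - u * star u ∈ M := sub_mem hhM (mul_mem huM (star_mem huM))
  obtain ⟨z, hz, hzh, hzann⟩ := exists_central_cover hh₁
  refine ⟨u, huM, hu, huf, hhu, z, hz, hzann _ hann, ?_⟩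
  rw [mul_sub, mul_one, ← hz.2.2 _ hh₁, hzh, sub_self]

end Comparison

section Trace

/-- A tracial weight on `M` without homogeneity, normality, faithfulness or semifiniteness; only
the values of `τ` on the positive cone of `M` matter. -/
structure IsAdditiveTrace (M : VonNeumannAlgebra H) (τ : (H →L[ℂ] H) → ENNReal) : Prop where
  map_zero : τ 0 = 0
  map_add : ∀ x y, x ∈ M → y ∈ M → 0 ≤ x → 0 ≤ y → τ (x + y) = τ x + τ y
  map_star_mul_self : ∀ x ∈ M, τ (star x * x) = τ (x * star x)

/-- No nonzero part of `e` cut out by a central projection has finite trace. This is the notion of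
infinite projection that drives the construction of isometries. -/
def IsProperlyTauInfinite (M : VonNeumannAlgebra H) (τ : (H →L[ℂ] H) → ENNReal)
    (e : H →L[ℂ] H) : Prop :=
  ∀ z, IsCentralProjection M z → τ (z * e) < ⊤ → z * e = 0

variable {τ : (H →L[ℂ] H) → ENNReal} {e f k r : H →L[ℂ] H}

theorem IsTauFiniteProjection.isStarProjection (h : IsTauFiniteProjection M τ f) :
    IsStarProjection f :=
  isProjection_iff_isStarProjection.1 h.2.1

theorem IsAdditiveTrace.mono (hτ : IsAdditiveTrace M τ) {x y : H →L[ℂ] H} (hx : x ∈ M) (hy : y ∈ M)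
    (hx₀ : 0 ≤ x) (hxy : x ≤ y) : τ x ≤ τ y := by
  rw [← add_sub_cancel x y, hτ.map_add x (y - x) hx (sub_mem hy hx) hx₀ (sub_nonneg.2 hxy)]
  exact le_self_add

theorem IsTauFiniteProjection.add (hτ : IsAdditiveTrace M τ) (hf : IsTauFiniteProjection M τ f)
    (hk : IsTauFiniteProjection M τ k) (hfk : f * k = 0) : IsTauFiniteProjection M τ (f + k) := by
  refine ⟨add_mem hf.1 hk.1, isProjection_iff_isStarProjection.2
    (hf.isStarProjection.add hk.isStarProjection hfk), ?_⟩
  rw [hτ.map_add f k hf.1 hk.1 hf.isStarProjection.nonneg hk.isStarProjection.nonneg]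
  exact ENNReal.add_lt_top.2 ⟨hf.2.2, hk.2.2⟩

theorem IsTauFiniteProjection.star_mul_self (hτ : IsAdditiveTrace M τ)
    (hr : IsTauFiniteProjection M τ r) {v : H →L[ℂ] H} (hvM : v ∈ M) (hv : IsPartialIsometry v)
    (hrv : r * v = v) : IsTauFiniteProjection M τ (star v * v) := by
  refine ⟨mul_mem (star_mem hvM) hvM, isProjection_iff_isStarProjection.2 hv, ?_⟩
  rw [hτ.map_star_mul_self v hvM]
  refine (hτ.mono (mul_mem hvM (star_mem hvM)) hr.1 (mul_star_self_nonneg v) ?_).trans_lt hr.2.2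
  exact hv.isStarProjection_mul_star.le_of_mul_eq_right hr.isStarProjection
    (by rw [← mul_assoc, hrv])

theorem IsTauFiniteProjection.central_mul (hτ : IsAdditiveTrace M τ)
    (hf : IsTauFiniteProjection M τ f) {z : H →L[ℂ] H} (hz : IsCentralProjection M z) :
    IsTauFiniteProjection M τ (z * f) := by
  have hz' := isProjection_iff_isStarProjection.1 hz.1
  have hzf : IsStarProjection (z * f) := hz'.mul hf.isStarProjection (hz.2.2 f hf.1)
  have hle : z * f ≤ f := hzf.le_of_mul_eq_left hf.isStarProjection <| by
    rw [mul_assoc, hf.isStarProjection.isIdempotentElem.eq]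
  have hzfM : z * f ∈ M := mul_mem hz.2.1 hf.1
  exact ⟨hzfM, isProjection_iff_isStarProjection.2 hzf,
    (hτ.mono hzfM hf.1 hzf.nonneg hle).trans_lt hf.2.2⟩

theorem exists_isTauFiniteProjection_mul_sub_eq_zero (hτ : IsAdditiveTrace M τ) (heM : e ∈ M)
    (he : IsStarProjection e) (hr : IsTauFiniteProjection M τ r) :
    ∃ k, IsTauFiniteProjection M τ k ∧ k ≤ e ∧ r * (e - k) = 0 := by
  obtain ⟨v, hvM, hv, hann⟩ := exists_star_mul_self_eq_rightSupport (mul_mem hr.1 heM)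
  have hk : IsStarProjection (rightSupport (r * e)) := isStarProjection_rightSupport _
  have hrv : r * v = v := by
    have := hann (1 - r) (by rw [← mul_assoc, hr.isStarProjection.one_sub_mul_self, zero_mul])
    rwa [sub_mul, one_mul, sub_eq_zero, eq_comm] at this
  have hke : rightSupport (r * e) ≤ e := hk.le_of_mul_eq_left he <| by
    have : rightSupport (r * e) * (1 - e) = 0 := rightSupport_mul_eq_zero_iff.2 <| by
      rw [mul_assoc, he.mul_one_sub_self, mul_zero]
    rwa [mul_sub, mul_one, sub_eq_zero, eq_comm] at this
  refine ⟨rightSupport (r * e), ?_, hke, ?_⟩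
  · rw [← hv]
    exact hr.star_mul_self hτ hvM (by rwa [IsPartialIsometry, hv]) hrv
  · rw [mul_sub, sub_eq_zero, ← (hk.le_iff_mul_eq_right he).1 hke, ← mul_assoc, mul_rightSupport]

theorem exists_isTauFiniteProjection_forall_mul_sub_eq_zero (hτ : IsAdditiveTrace M τ)
    (heM : e ∈ M) (he : IsStarProjection e) (s : Finset (H →L[ℂ] H))
    (hs : ∀ l ∈ s, IsTauFiniteProjection M τ l) :
    ∃ k, IsTauFiniteProjection M τ k ∧ k ≤ e ∧ ∀ l ∈ s, l * (e - k) = 0 := by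
  classical
  induction s using Finset.induction_on with
  | empty =>
    refine ⟨0, ⟨zero_mem M, isProjection_iff_isStarProjection.2 (.zero _), ?_⟩, he.nonneg, by simp⟩
    simp [hτ.map_zero]
  | insert a s ha ih =>
    obtain ⟨k, hk, hke, hks⟩ := ih fun l hl => hs l (Finset.mem_insert_of_mem hl)
    have hek : IsStarProjection (e - k) := (hk.isStarProjection.le_iff_sub he).1 hke
    obtain ⟨m, hm, hme, ham⟩ := exists_isTauFiniteProjection_mul_sub_eq_zero hτ
      (sub_mem heM hk.1) hek (hs a (Finset.mem_insert_self a s))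
    have hmul : (e - k) * m = m := (hm.isStarProjection.le_iff_mul_eq_right hek).1 hme
    have hkm : k * m = 0 := by
      rw [← hmul, ← mul_assoc, mul_sub, (hk.isStarProjection.le_iff_mul_eq_left he).1 hke,
        hk.isStarProjection.isIdempotentElem.eq, sub_self, zero_mul]
    refine ⟨k + m, hk.add hτ hm hkm, by rwa [add_comm, ← le_sub_iff_add_le], fun l hl => ?_⟩
    rw [← sub_sub]
    rcases Finset.mem_insert.1 hl with rfl | hl
    · exact ham
    · rw [mul_sub, ← hmul, ← mul_assoc, hks l hl, zero_mul, sub_self]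

theorem IsProperlyTauInfinite.exists_star_mul_self_eq (he : IsProperlyTauInfinite M τ e)
    (hτ : IsAdditiveTrace M τ) (heM : e ∈ M) (hep : IsStarProjection e)
    (hf : IsTauFiniteProjection M τ f) (hfe : f ≤ e)
    (hk : IsTauFiniteProjection M τ k) (hke : k ≤ e) :
    ∃ u ∈ M, star u * u = f ∧ (e - k) * u = u := by
  have hek : IsStarProjection (e - k) := (hk.isStarProjection.le_iff_sub hep).1 hke
  obtain ⟨v, hvM, hv, hve, hfv, z, hz, hzek, hzf⟩ :=
    exists_comparison (sub_mem heM hk.1) hf.1 hek hf.isStarProjection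
  have hvk : star v * v * k = 0 := by
    rw [mul_assoc, ← hve, mul_assoc, sub_mul, (hk.isStarProjection.le_iff_mul_eq_right hep).1 hke,
      hk.isStarProjection.isIdempotentElem.eq, sub_self, mul_zero, mul_zero]
  have hze : z * e = 0 := by
    have : z * (star v * v + k) = z * e := by
      rw [hz.2.2 _ (add_mem (mul_mem (star_mem hvM) hvM) hk.1), hz.2.2 e heM, eq_comm,
        ← sub_eq_zero, ← hzek]
      noncomm_ring
    refine he z hz ?_
    rw [← this]
    exact (((hf.star_mul_self hτ hvM hv hfv).add hτ hk hvk).central_mul hτ hz).2.2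
  have hfz : f * z = 0 := by
    rw [← hz.2.2 f hf.1, ← (hf.isStarProjection.le_iff_mul_eq_right hep).1 hfe, ← mul_assoc, hze,
      zero_mul]
  have hvf : star v * f = star v := by
    simpa [hf.isStarProjection.isSelfAdjoint.star_eq] using congr_arg star hfv
  refine ⟨star v, star_mem hvM, ?_, ?_⟩
  · have : (f - v * star v) * z = 0 := by
      rw [sub_mul, hfz, ← hvf, mul_assoc, mul_assoc, hfz, mul_zero, mul_zero, sub_self]
    rw [mul_sub, this, mul_one, sub_zero, sub_eq_zero] at hzf
    rw [star_star, hzf]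
  · simpa only [star_mul, hek.isSelfAdjoint.star_eq] using congr_arg star hve

end Trace

section Isometry

variable {τ : (H →L[ℂ] H) → ENNReal} {e f r : H →L[ℂ] H}

theorem exists_unilateral_shift (hf : IsStarProjection f) {t : ℕ → H →L[ℂ] H} (htM : ∀ n, t n ∈ M)
    (ht : ∀ n, star (t n) * t n = f) (he : IsStarProjection e) (het : ∀ n, e * t n = t n)
    (horth : Pairwise fun m n => star (t m) * t n = 0) :
    ∃ S ∈ M, IsPartialIsometry S ∧ e * S = S ∧ S * e = S ∧ star S * S * S = S ∧
      star S * S * t 0 = t 0 ∧ star (t 0) * S = 0 := by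
  have hti (n : ℕ) : IsPartialIsometry (t n) := by rwa [IsPartialIsometry, ht]
  have hte (n : ℕ) : star (t n) * e = star (t n) := by
    simpa [he.isSelfAdjoint.star_eq] using congr_arg star (het n)
  let u (n : ℕ) : H →L[ℂ] H := t (n + 1) * star (t n)
  have hu (n : ℕ) : star (u n) * u n = t n * star (t n) := by
    rw [star_mul, star_star, mul_assoc, ← mul_assoc _ (t _), ht, ← ht n,
      (hti n).star_mul_self_mul_star]
  obtain ⟨S, hS⟩ := exists_isOrthogonalSum (u := u)
    (fun n => by rw [IsPartialIsometry, hu]; exact (hti n).isStarProjection_mul_star)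
    (fun m n hmn => by
      have := horth ((add_left_injective 1).ne hmn)
      simp only [u, star_mul, star_star, mul_assoc]
      rw [← mul_assoc (star _) (t _), this, zero_mul, mul_zero])
    (fun m n hmn => by
      simp only [u, star_mul, star_star, mul_assoc]
      rw [← mul_assoc (star _) (t _), horth hmn, zero_mul, mul_zero])
  have hSt (n : ℕ) : star S * S * t n = t n := by
    have htt : star (u n) * u n * t n = t n := by
      rw [hu, mul_assoc, (hti n).mul_star_mul_self]
    rw [← htt, mul_assoc, ← mul_assoc S, hS.mul_star_mul_self, ← mul_assoc, hS.star_mul]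
  refine ⟨S, hS.mem fun n => mul_mem (htM _) (star_mem (htM n)),
    hS.isPartialIsometry, ?_, ?_, ?_, hSt 0, ?_⟩
  · exact hS.mul_left_eq_self fun n => by rw [← mul_assoc, het]
  · exact hS.mul_eq_self fun n => by rw [mul_assoc, hte]
  · exact hS.mul_left_eq_self fun n => by rw [← mul_assoc, hSt]
  · exact hS.mul_left_eq_zero fun n => by rw [← mul_assoc, horth n.succ_ne_zero.symm, zero_mul]

theorem exists_isometry_of_orthogonal_copies (heM : e ∈ M) (he : IsStarProjection e)
    (hf : IsStarProjection f) {t : ℕ → H →L[ℂ] H} (htM : ∀ n, t n ∈ M)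
    (ht : ∀ n, star (t n) * t n = f) (het : ∀ n, e * t n = t n)
    (horth : Pairwise fun m n => star (t m) * t n = 0) :
    ∃ v ∈ M, star v * v = e ∧ e * v = v ∧ star (t 0) * v = 0 := by
  obtain ⟨S, hSM, hS, heS, hSe, hSS, hSt, htS⟩ := exists_unilateral_shift hf htM ht he het horth
  have hte : star (t 0) * e = star (t 0) := by
    simpa [he.isSelfAdjoint.star_eq] using congr_arg star (het 0)
  have htQ : star (t 0) * (star S * S) = star (t 0) := by simpa using congr_arg star hSt
  have hQS : (e - star S * S) * S = 0 := by rw [sub_mul, heS, hSS, sub_self]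
  have hSQ : star S * (e - star S * S) = 0 := by
    simpa [he.isSelfAdjoint.star_eq] using congr_arg star hQS
  refine ⟨S + (e - star S * S), add_mem hSM (sub_mem heM (mul_mem (star_mem hSM) hSM)), ?_, ?_, ?_⟩
  · have hQ : IsStarProjection (e - star S * S) := hS.sub_of_mul_eq_left he (by rw [mul_assoc, hSe])
    rw [star_add, hQ.isSelfAdjoint.star_eq, add_mul, mul_add, mul_add, hSQ, hQS,
      hQ.isIdempotentElem.eq, add_zero, zero_add, add_sub_cancel]
  · have heS' : e * star S = star S := by
      simpa [he.isSelfAdjoint.star_eq] using congr_arg star hSe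
    rw [mul_add, mul_sub, heS, he.isIdempotentElem.eq, ← mul_assoc, heS']
  · rw [mul_add, htS, mul_sub, hte, htQ, sub_self, add_zero]

theorem IsProperlyTauInfinite.exists_forall_star_mul_eq_zero (he : IsProperlyTauInfinite M τ e)
    (hτ : IsAdditiveTrace M τ) (heM : e ∈ M) (hep : IsStarProjection e)
    (hf : IsTauFiniteProjection M τ f) (hfe : f ≤ e) (s : Finset (H →L[ℂ] H))
    (hs : ∀ u ∈ s, u ∈ M ∧ star u * u = f) :
    ∃ v ∈ M, star v * v = f ∧ e * v = v ∧ ∀ u ∈ s, star u * v = 0 := by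
  classical
  have hsi (u : H →L[ℂ] H) (hu : u ∈ s) : IsPartialIsometry u := by
    rw [IsPartialIsometry, (hs u hu).2]
    exact hf.isStarProjection
  have hsf (u : H →L[ℂ] H) (hu : u ∈ s) : IsTauFiniteProjection M τ (u * star u) := by
    simpa only [star_star] using hf.star_mul_self hτ (star_mem (hs u hu).1) (hsi u hu).star
      (by rw [← (hs u hu).2, (hsi u hu).star_mul_self_mul_star])
  obtain ⟨k, hk, hke, hks⟩ := exists_isTauFiniteProjection_forall_mul_sub_eq_zero hτ heM hep
    (s.image fun u => u * star u) (by simpa only [Finset.forall_mem_image] using hsf)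
  rw [Finset.forall_mem_image] at hks
  obtain ⟨v, hvM, hv, hkv⟩ := he.exists_star_mul_self_eq hτ heM hep hf hfe hk hke
  refine ⟨v, hvM, hv, ?_, fun u hu => ?_⟩
  · rw [← hkv, ← mul_assoc, mul_sub, hep.isIdempotentElem.eq,
      (hk.isStarProjection.le_iff_mul_eq_right hep).1 hke]
  · rw [← (hsi u hu).star_mul_self_mul_star, ← hkv, mul_assoc (star u), mul_assoc (star u),
      ← mul_assoc _ (e - k), hks hu, zero_mul, mul_zero]

theorem IsProperlyTauInfinite.exists_orthogonal_copies (he : IsProperlyTauInfinite M τ e)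
    (hτ : IsAdditiveTrace M τ) (heM : e ∈ M) (hep : IsStarProjection e)
    (hf : IsTauFiniteProjection M τ f) (hfe : f ≤ e) :
    ∃ t : ℕ → H →L[ℂ] H, t 0 = f ∧ (∀ n, t n ∈ M) ∧ (∀ n, star (t n) * t n = f) ∧
      (∀ n, e * t n = t n) ∧ Pairwise fun m n => star (t m) * t n = 0 := by
  classical
  have hff : star f * f = f := by
    rw [hf.isStarProjection.isSelfAdjoint.star_eq, hf.isStarProjection.isIdempotentElem.eq]
  let P (u : H →L[ℂ] H) : Prop := u ∈ M ∧ star u * u = f ∧ e * u = u ∧ star f * u = 0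
  let R (u v : H →L[ℂ] H) : Prop := star u * v = 0
  have R_symm {u v : H →L[ℂ] H} (huv : R u v) : R v u := by simpa using congr_arg star huv
  have : Std.Symm R := ⟨fun u v => R_symm⟩
  obtain ⟨t, ht, horth⟩ := exists_seq_of_forall_finset_exists' P R fun s hs => by
    obtain ⟨v, hvM, hv, hev, hvs⟩ := he.exists_forall_star_mul_eq_zero hτ heM hep hf hfe
      (insert f s) (Finset.forall_mem_insert .. |>.2 ⟨⟨hf.1, hff⟩,
        fun u hu => ⟨(hs u hu).1, (hs u hu).2.1⟩⟩)
    rw [Finset.forall_mem_insert] at hvs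
    exact ⟨v, ⟨hvM, hv, hev, hvs.1⟩, hvs.2⟩
  have hef : e * f = f := (hf.isStarProjection.le_iff_mul_eq_right hep).1 hfe
  refine ⟨fun | 0 => f | n + 1 => t n, rfl, fun | 0 => hf.1 | n + 1 => (ht n).1,
    fun | 0 => hff | n + 1 => (ht n).2.1, fun | 0 => hef | n + 1 => (ht n).2.2.1, ?_⟩
  rintro (_ | m) (_ | n) hmn
  · exact absurd rfl hmn
  · exact (ht n).2.2.2
  · exact R_symm (ht m).2.2.2
  · exact horth (by simpa using hmn)

theorem IsProperlyTauInfinite.exists_isometry_mul_eq_zero (he : IsProperlyTauInfinite M τ e)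
    (hτ : IsAdditiveTrace M τ) (heM : e ∈ M) (hep : IsStarProjection e)
    (hr : IsTauFiniteProjection M τ r) : ∃ v ∈ M, star v * v = e ∧ e * v = v ∧ r * v = 0 := by
  obtain ⟨f, hf, hfe, hrf⟩ := exists_isTauFiniteProjection_mul_sub_eq_zero hτ heM hep hr
  obtain ⟨t, ht₀, htM, ht, het, horth⟩ := he.exists_orthogonal_copies hτ heM hep hf hfe
  obtain ⟨v, hvM, hv, hev, hfv⟩ :=
    exists_isometry_of_orthogonal_copies heM hep hf.isStarProjection htM ht het horth
  refine ⟨v, hvM, hv, hev, ?_⟩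
  rw [ht₀, hf.isStarProjection.isSelfAdjoint.star_eq] at hfv
  rw [mul_sub, sub_eq_zero] at hrf
  rw [← hev, ← mul_assoc, hrf, mul_assoc, hfv, mul_zero]

end Isometry

theorem exists_isometry_forall_commute {τ : (H →L[ℂ] H) → ENNReal} {r : H →L[ℂ] H}
    {S : Type*} [SetLike S (H →L[ℂ] H)] [SubringClass S (H →L[ℂ] H)] {A : S}
    (hτ : IsAdditiveTrace M τ) (hr : IsTauFiniteProjection M τ r) (hAM : ∀ a ∈ A, a ∈ M)
    (hA : ∀ a ∈ A, ∀ b ∈ A, Commute a b)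
    (hinf : ∀ e ∈ A, IsStarProjection e → IsProperlyTauInfinite M τ e)
    (s : Finset (H →L[ℂ] H)) (hs : ∀ g ∈ s, g ∈ A ∧ IsStarProjection g)
    {e : H →L[ℂ] H} (heA : e ∈ A) (he : IsStarProjection e) :
    ∃ v ∈ M, star v * v = e ∧ e * v = v ∧ r * v = 0 ∧ ∀ g ∈ s, Commute v g := by
  classical
  induction s using Finset.induction_on generalizing e with
  | empty =>
    obtain ⟨v, hvM, hv, hev, hrv⟩ :=
      (hinf e heA he).exists_isometry_mul_eq_zero hτ (hAM e heA) he hr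
    exact ⟨v, hvM, hv, hev, hrv, by simp⟩
  | insert g s _ ih =>
    rw [Finset.forall_mem_insert] at hs
    obtain ⟨⟨hgA, hg⟩, hs⟩ := hs
    have hgc : IsStarProjection (1 - g) := hg.one_sub
    have hgcA : 1 - g ∈ A := sub_mem (one_mem A) hgA
    obtain ⟨v, hvM, hv, hev, hrv, hvs⟩ :=
      ih hs (mul_mem heA hgA) (he.mul hg (hA e heA g hgA))
    obtain ⟨w, hwM, hw, hew, hrw, hws⟩ :=
      ih hs (mul_mem heA hgcA) (he.mul hgc (hA e heA _ hgcA))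
    have hge : Commute g e := hA g hgA e heA
    obtain ⟨hev, hgv, hvg⟩ := mul_eq_self_of_mul_mul_eq_self he hg hge hv hev
    obtain ⟨hew, hgw, hwg⟩ := mul_eq_self_of_mul_mul_eq_self he hgc
      ((Commute.one_left e).sub_left hge) hw hew
    have hwc : Commute w (1 - g) := hwg.trans hgw.symm
    have hvw : star v * w = 0 := by
      rw [← hgv, ← hgw, star_mul, hg.isSelfAdjoint.star_eq, mul_assoc, ← mul_assoc g,
        hg.mul_one_sub_self, zero_mul, mul_zero]
    have hwv : star w * v = 0 := by simpa using congr_arg star hvw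
    refine ⟨v + w, add_mem hvM hwM, ?_, by rw [mul_add, hev, hew],
      by rw [mul_add, hrv, hrw, add_zero], Finset.forall_mem_insert .. |>.2 ⟨?_, ?_⟩⟩
    · rw [star_add, add_mul, mul_add, mul_add, hv, hw, hvw, hwv, mul_sub, mul_one, add_zero,
        zero_add, add_sub_cancel]
    · exact Commute.add_left (hvg.trans hgv.symm)
        (by simpa using (Commute.one_right w).sub_right hwc)
    · exact fun l hl => (hvs l hl).add_left (hws l hl)

section Spectral

theorem norm_le_of_neg_algebraMap_le_of_le_algebraMap {A : Type*} [CStarAlgebra A]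
    [PartialOrder A] [StarOrderedRing A] {a : A} {c : ℝ} (hc : 0 ≤ c)
    (h₁ : -algebraMap ℝ A c ≤ a) (h₂ : a ≤ algebraMap ℝ A c) : ‖a‖ ≤ c := by
  have ha : IsSelfAdjoint a := by
    simpa only [sub_sub_cancel] using
      (IsSelfAdjoint.algebraMap A (.all c)).sub (.of_nonneg (sub_nonneg.2 h₂))
  cases subsingleton_or_nontrivial A
  · rwa [Subsingleton.elim a 0, norm_zero]
  rcases CStarAlgebra.norm_or_neg_norm_mem_spectrum ha with h | h
  · exact (le_algebraMap_iff_spectrum_le ha).1 h₂ _ h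
  · exact neg_le_neg_iff.1 <|
      (algebraMap_le_iff_le_spectrum ha).1 (by rwa [map_neg]) _ h

theorem le_norm_smul_of_mul_eq_self {A : Type*} [CStarAlgebra A] [PartialOrder A]
    [StarOrderedRing A] {a e : A} (ha : IsSelfAdjoint a) (he : IsStarProjection e)
    (h : a * e = a) : a ≤ ‖a‖ • e := by
  calc a = star e * a * e := by
        rw [he.isSelfAdjoint.star_eq, mul_assoc, h, ← ha.star_eq, ← he.isSelfAdjoint.star_eq,
          ← star_mul, h]
    _ ≤ ‖a‖ • (star e * e) := CStarAlgebra.star_left_conjugate_le_norm_smul ha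
    _ = ‖a‖ • e := by rw [he.isSelfAdjoint.star_eq, he.isIdempotentElem.eq]

theorem posPart_mem {a : H →L[ℂ] H} (ha : a ∈ M) : a⁺ ∈ M :=
  mem_iff_forall_commutant_commute.2 fun _ hy =>
    ((commute_of_mem_commutant ha hy).symm.cfcₙ_real _).symm

/-- The real span of the projections of `M`. -/
def projectionSpan (M : VonNeumannAlgebra H) : Submodule ℝ (H →L[ℂ] H) :=
  Submodule.span ℝ {e | e ∈ M ∧ IsStarProjection e}

theorem mem_of_mem_projectionSpan {b : H →L[ℂ] H} (hb : b ∈ projectionSpan M) : b ∈ M := by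
  induction hb using Submodule.span_induction with
  | mem e he => exact he.1
  | zero => exact zero_mem M
  | add x y _ _ hx hy => exact add_mem hx hy
  | smul c x _ hx => exact SMulMemClass.smul_mem (s := M.toStarSubalgebra) (c : ℂ) hx

theorem isSelfAdjoint_of_mem_projectionSpan {b : H →L[ℂ] H} (hb : b ∈ projectionSpan M) :
    IsSelfAdjoint b :=
  (Submodule.span_le (p := selfAdjoint.submodule ℝ (H →L[ℂ] H))).2
    (fun _ he => he.2.isSelfAdjoint) hb

theorem exists_mem_projectionSpan_norm_sub_le {a : H →L[ℂ] H} (haM : a ∈ M)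
    (ha : IsSelfAdjoint a) : ∃ b ∈ projectionSpan M, ‖a - b‖ ≤ ‖a‖ / 2 := by
  set e := rightSupport a⁺
  set c := ‖a‖ / 2
  have he : IsStarProjection e := isStarProjection_rightSupport _
  have heM : e ∈ M := rightSupport_mem (posPart_mem haM)
  have hpos : a⁺ ≤ ‖a‖ • e := calc
    a⁺ ≤ ‖a⁺‖ • e := le_norm_smul_of_mul_eq_self (CFC.posPart_nonneg a).isSelfAdjoint he
      (mul_rightSupport _)
    _ ≤ ‖a‖ • e := smul_le_smul_of_nonneg_right (CStarAlgebra.norm_posPart_le a) he.nonneg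
  have hneg : a⁻ ≤ ‖a‖ • (1 - e) := calc
    a⁻ ≤ ‖a⁻‖ • (1 - e) := by
      refine le_norm_smul_of_mul_eq_self (CFC.negPart_nonneg a).isSelfAdjoint he.one_sub ?_
      rw [mul_sub, mul_one, (mul_rightSupport_eq_zero_iff (CFC.posPart_nonneg a).isSelfAdjoint).2
        (CFC.negPart_mul_posPart a), sub_zero]
    _ ≤ ‖a‖ • (1 - e) :=
      smul_le_smul_of_nonneg_right (CStarAlgebra.norm_negPart_le a) he.one_sub.nonneg
  have hb : c • e - c • (1 - e) ∈ projectionSpan M :=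
    sub_mem (Submodule.smul_mem _ c (Submodule.subset_span ⟨heM, he⟩))
      (Submodule.smul_mem _ c (Submodule.subset_span ⟨sub_mem (one_mem M) heM, he.one_sub⟩))
  have hac : ‖a‖ = c + c := (add_halves _).symm
  refine ⟨_, hb, norm_le_of_neg_algebraMap_le_of_le_algebraMap (by positivity) ?_ ?_⟩
  · calc -algebraMap ℝ _ c = -(‖a‖ • (1 - e)) - (c • e - c • (1 - e)) := by
          rw [Algebra.algebraMap_eq_smul_one, hac]; module
      _ ≤ a - (c • e - c • (1 - e)) :=
          sub_le_sub_right ((neg_le_neg hneg).trans (CFC.neg_negPart_le ha)) _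
  · calc a - (c • e - c • (1 - e)) ≤ ‖a‖ • e - (c • e - c • (1 - e)) :=
          sub_le_sub_right ((CFC.le_posPart ha).trans hpos) _
      _ = algebraMap ℝ _ c := by
          rw [Algebra.algebraMap_eq_smul_one, hac]; module

theorem exists_mem_projectionSpan_norm_sub_le_div_two_pow (m : ℕ) {a : H →L[ℂ] H} (haM : a ∈ M)
    (ha : IsSelfAdjoint a) : ∃ b ∈ projectionSpan M, ‖a - b‖ ≤ ‖a‖ / 2 ^ m := by
  induction m generalizing a with
  | zero => exact ⟨0, zero_mem _, by simp⟩
  | succ m ih =>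
    obtain ⟨b, hb, hab⟩ := exists_mem_projectionSpan_norm_sub_le haM ha
    obtain ⟨c, hc, habc⟩ := ih (sub_mem haM (mem_of_mem_projectionSpan hb))
      (ha.sub (isSelfAdjoint_of_mem_projectionSpan hb))
    refine ⟨b + c, add_mem hb hc, ?_⟩
    calc ‖a - (b + c)‖ = ‖a - b - c‖ := by rw [sub_add_eq_sub_sub]
      _ ≤ ‖a - b‖ / 2 ^ m := habc
      _ ≤ ‖a‖ / 2 / 2 ^ m := by gcongr
      _ = ‖a‖ / 2 ^ (m + 1) := by rw [div_div, pow_succ']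

theorem exists_mem_projectionSpan_norm_sub_lt {a : H →L[ℂ] H} (haM : a ∈ M)
    (ha : IsSelfAdjoint a) {ε : ℝ} (hε : 0 < ε) : ∃ b ∈ projectionSpan M, ‖a - b‖ < ε := by
  obtain ⟨m, hm⟩ := pow_unbounded_of_one_lt (‖a‖ / ε) one_lt_two
  obtain ⟨b, hb, hab⟩ := exists_mem_projectionSpan_norm_sub_le_div_two_pow m haM ha
  refine ⟨b, hb, hab.trans_lt ?_⟩
  rwa [div_lt_iff₀ (by positivity), mul_comm, ← div_lt_iff₀ hε]

theorem exists_finset_forall_norm_commutator_le {a : H →L[ℂ] H} (haM : a ∈ M)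
    (ha : IsSelfAdjoint a) {ε : ℝ} (hε : 0 < ε) :
    ∃ s : Finset (H →L[ℂ] H), (∀ e ∈ s, e ∈ M ∧ IsStarProjection e) ∧
      ∀ v : H →L[ℂ] H, ‖v‖ ≤ 1 → (∀ e ∈ s, Commute v e) → ‖v * a - a * v‖ ≤ ε := by
  obtain ⟨b, hb, hab⟩ := exists_mem_projectionSpan_norm_sub_lt haM ha (half_pos hε)
  obtain ⟨s, hs, hbs⟩ := Submodule.mem_span_finite_of_mem_span hb
  refine ⟨s, hs, fun v hv hvs => ?_⟩
  have hvb : Commute v b := by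
    have hsv : Submodule.span ℝ (s : Set (H →L[ℂ] H)) ≤
        (Subalgebra.centralizer ℝ {v}).toSubmodule :=
      Submodule.span_le.2 <| by rintro e he _ rfl; exact hvs e he
    exact hsv hbs v rfl
  calc ‖v * a - a * v‖ = ‖v * (a - b) - (a - b) * v‖ := by
        rw [mul_sub, sub_mul, hvb.eq, sub_sub_sub_cancel_right]
    _ ≤ ‖v‖ * ‖a - b‖ + ‖a - b‖ * ‖v‖ :=
        (norm_sub_le _ _).trans (add_le_add (norm_mul_le _ _) (norm_mul_le _ _))
    _ ≤ 1 * (ε / 2) + ε / 2 * 1 := by gcongr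
    _ = ε := by ring

end Spectral

section CenterGenerated

variable {τ : (H →L[ℂ] H) → ENNReal} {S : Set (H →L[ℂ] H)}

theorem star_mem_union_centerSet (hS : ∀ x ∈ S, IsSelfAdjoint x) {x : H →L[ℂ] H}
    (hx : x ∈ S ∪ centerSet M) : star x ∈ S ∪ centerSet M := by
  refine hx.imp (fun hx => (hS x hx).star_eq.symm ▸ hx) fun hx => ⟨star_mem hx.1, fun y hy => ?_⟩
  simpa using congr_arg star (hx.2 (star y) (star_mem hy)).symm

/-- `WZ*(S)` as a von Neumann algebra, for a set `S` of self-adjoint operators. -/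
def WZstarAlgebra (M : VonNeumannAlgebra H) (S : Set (H →L[ℂ] H))
    (hS : ∀ x ∈ S, IsSelfAdjoint x) : VonNeumannAlgebra H where
  carrier := WZstar M S
  mul_mem' := Set.mul_mem_centralizer
  add_mem' := Set.add_mem_centralizer
  algebraMap_mem' r x _ := (Algebra.commutes r x).symm
  star_mem' := Set.star_mem_centralizer' fun _ =>
    Set.star_mem_centralizer' fun _ => star_mem_union_centerSet hS
  centralizer_centralizer' := by
    simp only [WZstar, Set.centralizer_centralizer_centralizer]

theorem subset_WZstar : S ∪ centerSet M ⊆ WZstar M S := Set.subset_centralizer_centralizer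

theorem WZstar_subset (hS : S ⊆ M) : WZstar M S ⊆ M := by
  have : S ∪ centerSet M ⊆ M := Set.union_subset hS fun _ hx => hx.1
  rw [← M.centralizer_centralizer]
  exact Set.centralizer_subset (Set.centralizer_subset this)

theorem commute_of_mem_WZstar (hS : S ⊆ M) (hcomm : ∀ x ∈ S, ∀ y ∈ S, Commute x y)
    {x y : H →L[ℂ] H} (hx : x ∈ WZstar M S) (hy : y ∈ WZstar M S) : Commute x y := by
  refine Set.centralizer_centralizer_comm_of_comm (S := S ∪ centerSet M) ?_ x hx y hy
  rintro x (hx | hx) y (hy | hy)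
  · exact hcomm x hx y hy
  · exact (hy.2 x (hS hx)).symm
  · exact hx.2 y (hS hy)
  · exact hx.2 y hy.1

theorem isProperlyTauInfinite_of_mem_WZstar (hS : S ⊆ M)
    (htriv : ∀ e ∈ WZstar M S, IsTauFiniteProjection M τ e → e = 0) {e : H →L[ℂ] H}
    (he : IsStarProjection e) (heS : e ∈ WZstar M S) : IsProperlyTauInfinite M τ e := by
  intro z hz hlt
  have hzS : z * e ∈ WZstar M S := Set.mul_mem_centralizer (subset_WZstar (.inr hz.2)) heS
  have hze : IsStarProjection (z * e) :=
    (isProjection_iff_isStarProjection.1 hz.1).mul he (hz.2.2 e (WZstar_subset hS heS))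
  exact htriv _ hzS
    ⟨WZstar_subset hS hzS, isProjection_iff_isStarProjection.2 hze, hlt⟩

end CenterGenerated

theorem exists_isometry_forall_norm_commutator_le {τ : (H →L[ℂ] H) → ENNReal}
    {S : Set (H →L[ℂ] H)} {r : H →L[ℂ] H} (hτ : IsAdditiveTrace M τ)
    (hr : IsTauFiniteProjection M τ r) (hSfin : S.Finite) (hSM : S ⊆ M)
    (hSsa : ∀ a ∈ S, IsSelfAdjoint a) (hScomm : ∀ a ∈ S, ∀ b ∈ S, Commute a b)
    (htriv : ∀ e ∈ WZstar M S, IsTauFiniteProjection M τ e → e = 0) {ε : ℝ} (hε : 0 < ε) :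
    ∃ v ∈ M, star v * v = 1 ∧ r * v = 0 ∧ ∀ a ∈ S, ‖v * a - a * v‖ ≤ ε := by
  classical
  let W := WZstarAlgebra M S hSsa
  have hSW : ∀ a ∈ S, a ∈ W := fun a ha => subset_WZstar (.inl ha)
  choose! s hs hsε using fun a (ha : a ∈ S) =>
    exists_finset_forall_norm_commutator_le (hSW a ha) (hSsa a ha) hε
  obtain ⟨v, hvM, hv, -, hrv, hvs⟩ := exists_isometry_forall_commute (A := W) hτ hr
    (fun _ ha => WZstar_subset hSM ha)
    (fun _ ha _ hb => commute_of_mem_WZstar hSM hScomm ha hb)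
    (fun _ heW he => isProperlyTauInfinite_of_mem_WZstar hSM htriv he heW)
    (hSfin.toFinset.biUnion s) (by simpa using fun e a ha => hs a ha e)
    (one_mem W) (.one _)
  have hvnorm : ‖v‖ ≤ 1 := (isPartialIsometry_of_star_mul_self_eq_one hv).norm_le_one
  refine ⟨v, hvM, hv, hrv, fun a ha => hsε a ha v hvnorm fun e he => hvs e ?_⟩
  exact Finset.mem_biUnion.2 ⟨a, hSfin.mem_toFinset.2 ha, he⟩

theorem norm_mul_commutator_le {A : Type*} [NormedRing A] {v p : A} (hv : ‖v‖ ≤ 1)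
    (hp : ‖p‖ ≤ 1) (a : A) :
    ‖v * p * a - a * (v * p)‖ ≤ ‖v * a - a * v‖ + ‖p * a - a * p‖ :=
  calc ‖v * p * a - a * (v * p)‖ = ‖(v * a - a * v) * p + v * (p * a - a * p)‖ := by
        congr 1; noncomm_ring
    _ ≤ ‖v * a - a * v‖ * ‖p‖ + ‖v‖ * ‖p * a - a * p‖ :=
        (norm_add_le _ _).trans (add_le_add (norm_mul_le _ _) (norm_mul_le _ _))
    _ ≤ ‖v * a - a * v‖ * 1 + 1 * ‖p * a - a * p‖ := by gcongr
    _ = ‖v * a - a * v‖ + ‖p * a - a * p‖ := by rw [mul_one, one_mul]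

theorem IsFNSTrace.isAdditiveTrace {τ : (H →L[ℂ] H) → ENNReal} (hτ : IsFNSTrace M τ) :
    IsAdditiveTrace M τ :=
  ⟨hτ.map_zero, hτ.additive, hτ.tracial⟩

theorem IsTauFiniteProjection.isFiniteProjection {τ : (H →L[ℂ] H) → ENNReal} {e : H →L[ℂ] H}
    (he : IsTauFiniteProjection M τ e) (hτ : IsFNSTrace M τ) : IsFiniteProjection M e := by
  refine ⟨he.1, he.2.1, ?_⟩
  rintro q hqM hq heq ⟨v, hvM, hvq, hve⟩
  have hq' : IsStarProjection q := isProjection_iff_isStarProjection.1 hq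
  have hle : 0 ≤ e - q := sub_nonneg.2 (hq'.le_of_mul_eq_right he.isStarProjection heq)
  have heqM : e - q ∈ M := sub_mem he.1 hqM
  have hτq : τ q = τ e := hvq ▸ hve ▸ hτ.tracial v hvM
  have hτe : τ e + τ (e - q) = τ e + 0 := by
    rw [← hτq, ← hτ.additive q (e - q) hqM heqM hq'.nonneg hle, add_sub_cancel, add_zero, hτq]
  have hzero : τ (e - q) = 0 := (ENNReal.add_right_inj he.2.2.ne).1 hτe
  exact (sub_eq_zero.1 (hτ.faithful _ heqM hle hzero)).symm

end VNA

open VNA in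
theorem statement_17_general {H : Type*} [NormedAddCommGroup H] [InnerProductSpace ℂ H]
    [CompleteSpace H] (M : VonNeumannAlgebra H) (τ : (H →L[ℂ] H) → ENNReal)
    (hτ : IsAdditiveTrace M τ) (n : ℕ) (α : Fin n → (H →L[ℂ] H))
    (hα : IsCommutingSelfAdjointTuple M α)
    (htriv : ∀ e ∈ WZstar M (Set.range α), IsTauFiniteProjection M τ e → e = 0)
    (p r : H →L[ℂ] H) (hp : p ∈ M ∧ IsProjection p) (hr : IsTauFiniteProjection M τ r)
    (ε : ℝ) (hε : 0 < ε) :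
    ∃ w ∈ M, (1 - r) * (w * star w) = w * star w ∧ star w * w = p ∧
      ∀ j, ‖w * α j - α j * w‖ ≤ ε + ‖p * α j - α j * p‖ := by
  obtain ⟨hαM, hαsa, hαcomm⟩ := hα
  obtain ⟨v, hvM, hv, hrv, hvα⟩ := exists_isometry_forall_norm_commutator_le hτ hr
    (Set.finite_range α) (Set.range_subset_iff.2 hαM) (Set.forall_mem_range.2 hαsa)
    (by rintro _ ⟨i, rfl⟩ _ ⟨j, rfl⟩; exact hαcomm i j) htriv hε
  have hp' : IsStarProjection p := isProjection_iff_isStarProjection.1 hp.2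
  have hvnorm : ‖v‖ ≤ 1 := (isPartialIsometry_of_star_mul_self_eq_one hv).norm_le_one
  refine ⟨v * p, mul_mem hvM hp.1, ?_, ?_, fun j => ?_⟩
  · rw [sub_mul, one_mul, mul_assoc v, ← mul_assoc r, hrv, zero_mul, sub_zero]
  · rw [star_mul, mul_assoc, ← mul_assoc (star v), hv, one_mul, hp.2.2, hp.2.1]
  · exact (norm_mul_commutator_le hvnorm hp'.norm_le (α j)).trans
      (add_le_add_left (hvα _ ⟨j, rfl⟩) _)

open VNA in
/-- For projections `p, r ∈ M` with `r` τ-finite, there is a partial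
isometry `w` with `w w* ≤ 1 - r`, `w* w = p` and `‖[w,α]‖ ≤ ε + ‖[p,α]‖`. -/
theorem statement_17 {H : Type*} [NormedAddCommGroup H] [InnerProductSpace ℂ H]
    [CompleteSpace H] (M : VonNeumannAlgebra H)
    (hM : ProperlyInfinite M) (hσ : SigmaFinite M)
    (τ : (H →L[ℂ] H) → ENNReal) (hτ : IsFNSTrace M τ)
    (n : ℕ) (hn : 0 < n) (α : Fin n → (H →L[ℂ] H))
    (hα : IsCommutingSelfAdjointTuple M α)
    (htriv : ∀ x ∈ WZstar M (Set.range α), IsFiniteProjection M x → x = 0)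
    (p r : H →L[ℂ] H) (hp : p ∈ M ∧ IsProjection p)
    (hr : IsTauFiniteProjection M τ r)
    (ε : ℝ) (hε : 0 < ε) :
    ∃ w, w ∈ M ∧ (1 - r) * (w * star w) = w * star w ∧ star w * w = p ∧
      commNorm α w ≤ ε + commNorm α p := by
  have : Nonempty (Fin n) := ⟨⟨0, hn⟩⟩
  obtain ⟨w, hwM, hrw, hwp, hwα⟩ := statement_17_general M τ hτ.isAdditiveTrace n α hα
    (fun e he hfin => htriv e he (hfin.isFiniteProjection hτ)) p r hp hr ε hε
  exact ⟨w, hwM, hrw, hwp, ciSup_le fun j => (hwα j).trans <| add_le_add_right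
    (le_ciSup (f := fun j => ‖p * α j - α j * p‖) (Set.finite_range _).bddAbove j) ε⟩
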